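/- Let r : V → V → Prop be a digraph and let s_1, t_1, s_2, t_2 be vertices of V. Define the digraph r' on Option V by: r' (some a) (some b) holds iff r a b holds; r' (some t_1) none holds; r' none (some s_2) holds; and no other arcs exist (in particular the new vertex none, serving as the waypoint w, has exactly one incoming arc, from t_1, and one outgoing arc, to s_2). Then the following are equivalent: (i) there exist a directed walk W from some s_1 to none and a directed walk W' from none to some t_2 in r' such that the concatenation of their arc lists has no duplicate arcs; (ii) there exist a directed path from s_1 to t_1 and a directed path from s_2 to t_2 in r that are arc-disjoint. -/

import Mathlib

/-- A directed walk in the digraph `r` from `a` to `b`: a nonempty list of vertices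
starting at `a`, ending at `b`, with `r` holding between consecutive vertices. -/
def IsDiwalk {V : Type*} (r : V → V → Prop) (a b : V) (l : List V) : Prop :=
  l ≠ [] ∧ l.head? = some a ∧ l.getLast? = some b ∧ l.Chain' r

/-- The arcs of a directed walk: the list of ordered pairs of consecutive vertices. -/
def arcs {V : Type*} (l : List V) : List (V × V) := l.zip l.tail

/-- A directed path: a directed walk with no repeated vertices. -/
def IsDipath {V : Type*} (r : V → V → Prop) (a b : V) (l : List V) : Prop :=
  IsDiwalk r a b l ∧ l.Nodup

/-- The digraph on `Option V` obtained from `r` by adding a new waypoint vertex `none`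
with exactly one incoming arc (from `t₁`) and one outgoing arc (to `s₂`). -/
def addWaypoint {V : Type*} (r : V → V → Prop) (t₁ s₂ : V) :
    Option V → Option V → Prop
  | some a, some b => r a b
  | some a, none => a = t₁
  | none, some b => b = s₂
  | none, none => False

/-!
Deleting closed detours turns a walk into a path using only arcs of that walk, so in any digraph
a pair of walks that together repeat no arc can be replaced by a pair of arc-disjoint paths, and
conversely. A path ending at the waypoint visits it nowhere else, hence is a path of the original
digraph followed by the arc from `t₁`; dually, a path leaving the waypoint is the arc to `s₂`
followed by a path of the original digraph. The two added arcs are distinct and new, so they do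
not affect disjointness.
-/

section Arcs

variable {U V : Type*}

theorem arcs_cons (a : V) (l : List V) :
    arcs (a :: l) = (l.head?.map (a, ·)).toList ++ arcs l := by
  cases l <;> simp [arcs]

theorem arcs_concat (l : List V) (b : V) :
    arcs (l ++ [b]) = arcs l ++ (l.getLast?.map (·, b)).toList := by
  induction l with
  | nil => simp [arcs]
  | cons a l ih =>
    rw [List.cons_append, arcs_cons, ih, arcs_cons]
    cases l <;> simp [arcs]

theorem arcs_map (f : V → U) (l : List V) : arcs (l.map f) = (arcs l).map (Prod.map f f) := by
  rw [arcs, ← List.map_tail, List.zip_map, arcs]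

theorem arcs_drop (n : ℕ) (l : List V) : arcs (l.drop n) = (arcs l).drop n := by
  simp [arcs, List.zip, List.drop_zipWith]

theorem arcs_subset_of_suffix {l₁ l₂ : List V} (h : l₁ <:+ l₂) : arcs l₁ ⊆ arcs l₂ := by
  rw [List.suffix_iff_eq_drop.1 h, arcs_drop]
  exact List.drop_subset _ _

theorem nodup_arcs {l : List V} (h : l.Nodup) : (arcs l).Nodup := by
  have map_snd : (arcs l).map Prod.snd = l.tail := List.map_snd_zip (by simp)
  exact .of_map Prod.snd (map_snd ▸ h.tail)

end Arcs

section Walks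

variable {U V : Type*} {r : V → V → Prop} {a b c d x : V} {l l' : List V}

theorem isDiwalk_iff_isChain :
    IsDiwalk r a b l ↔ l.head? = some a ∧ l.getLast? = some b ∧ l.IsChain r :=
  ⟨fun h => h.2, fun h => ⟨by rintro rfl; simp at h, h⟩⟩

theorem isDiwalk_cons (hl : l ≠ []) :
    IsDiwalk r a b (x :: l) ↔ x = a ∧ ∃ c, r a c ∧ IsDiwalk r c b l := by
  obtain ⟨y, l, rfl⟩ := List.exists_cons_of_ne_nil hl
  simp only [isDiwalk_iff_isChain, List.head?_cons, List.getLast?_cons_cons,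
    List.isChain_cons_cons, Option.some_inj]
  grind

theorem isDiwalk_concat (hl : l ≠ []) :
    IsDiwalk r a b (l ++ [x]) ↔ x = b ∧ ∃ c, IsDiwalk r a c l ∧ r c b := by
  simp only [isDiwalk_iff_isChain, List.isChain_append, List.getLast?_concat,
    List.getLast?_eq_some_getLast hl, List.head?_append_of_ne_nil _ hl, List.head?_cons,
    List.isChain_singleton, Option.mem_some_iff, Option.some_inj]
  grind

theorem isDiwalk_map {r : U → U → Prop} {f : V → U} (hf : f.Injective) :
    IsDiwalk r (f a) (f b) (l.map f) ↔ IsDiwalk (fun x y => r (f x) (f y)) a b l := by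
  simp [isDiwalk_iff_isChain, List.isChain_map, hf.eq_iff]

theorem IsDiwalk.suffix (h : IsDiwalk r a b l) (hl : x :: l' <:+ l) :
    IsDiwalk r x b (x :: l') := by
  obtain ⟨-, -, hlast, hchain⟩ := h
  refine ⟨by simp, rfl, ?_, hchain.suffix hl⟩
  obtain ⟨l₀, rfl⟩ := hl
  simpa using hlast

theorem IsDiwalk.exists_isDipath (h : IsDiwalk r a b l) :
    ∃ p, IsDipath r a b p ∧ arcs p ⊆ arcs l := by
  induction l generalizing a with
  | nil => exact absurd rfl h.1
  | cons x l ih =>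
    rcases eq_or_ne l [] with rfl | hl
    · exact ⟨[x], ⟨h, List.nodup_singleton x⟩, List.Subset.refl _⟩
    obtain ⟨rfl, c, hxc, hcb⟩ := (isDiwalk_cons hl).1 h
    obtain ⟨p, ⟨hp, hnodup⟩, hsub⟩ := ih hcb
    by_cases hx : x ∈ p
    · obtain ⟨p₁, p₂, rfl⟩ := List.append_of_mem hx
      have hsuffix : x :: p₂ <:+ p₁ ++ x :: p₂ := List.suffix_append _ _
      refine ⟨x :: p₂, ⟨hp.suffix hsuffix, hnodup.sublist hsuffix.sublist⟩, ?_⟩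
      calc
        arcs (x :: p₂) ⊆ arcs (p₁ ++ x :: p₂) := arcs_subset_of_suffix hsuffix
        _ ⊆ arcs l := hsub
        _ ⊆ arcs (x :: l) := arcs_subset_of_suffix (List.suffix_cons x l)
    · refine ⟨x :: p, ⟨(isDiwalk_cons hp.1).2 ⟨rfl, c, hxc, hp⟩, hnodup.cons hx⟩, ?_⟩
      rw [arcs_cons, arcs_cons, hp.2.1, hcb.2.1]
      exact List.cons_subset_cons _ hsub

theorem exists_isDiwalk_nodup_arcs_append_iff :
    (∃ W W', IsDiwalk r a b W ∧ IsDiwalk r c d W' ∧ (arcs W ++ arcs W').Nodup) ↔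
      ∃ P Q, IsDipath r a b P ∧ IsDipath r c d Q ∧ List.Disjoint (arcs P) (arcs Q) := by
  constructor
  · rintro ⟨W, W', hW, hW', hnodup⟩
    obtain ⟨P, hP, hPW⟩ := hW.exists_isDipath
    obtain ⟨Q, hQ, hQW'⟩ := hW'.exists_isDipath
    have hdisj : List.Disjoint (arcs W) (arcs W') := List.disjoint_of_nodup_append hnodup
    exact ⟨P, Q, hP, hQ, fun _ heP heQ => hdisj (hPW heP) (hQW' heQ)⟩
  · rintro ⟨P, Q, hP, hQ, hdisj⟩
    exact ⟨P, Q, hP.1, hQ.1, (nodup_arcs hP.2).append (nodup_arcs hQ.2) hdisj⟩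

end Walks

theorem exists_map_some_eq_of_none_notMem {α : Type*} {l : List (Option α)} (h : none ∉ l) :
    ∃ k : List α, k.map some = l := by
  rw [← Set.mem_range, Set.range_list_map]
  exact fun _ hx => Option.ne_none_iff_exists.1 (ne_of_mem_of_not_mem hx h)

section Waypoint

variable {V : Type*} {r : V → V → Prop} {s t t₁ s₂ : V}

theorem isDiwalk_addWaypoint_map_some {P : List V} :
    IsDiwalk (addWaypoint r t₁ s₂) (some s) (some t) (P.map some) ↔ IsDiwalk r s t P :=
  isDiwalk_map (Option.some_injective V)

theorem isDiwalk_addWaypoint_concat_none {P : List V} :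
    IsDiwalk (addWaypoint r t₁ s₂) (some s) none (P.map some ++ [none]) ↔
      IsDiwalk r s t₁ P := by
  rcases eq_or_ne P [] with rfl | hP
  · simp [IsDiwalk]
  · simp [isDiwalk_concat, hP, Option.exists, addWaypoint, isDiwalk_addWaypoint_map_some]

theorem isDiwalk_addWaypoint_cons_none {Q : List V} :
    IsDiwalk (addWaypoint r t₁ s₂) none (some t) (none :: Q.map some) ↔
      IsDiwalk r s₂ t Q := by
  rcases eq_or_ne Q [] with rfl | hQ
  · simp [IsDiwalk]
  · simp [isDiwalk_cons, hQ, Option.exists, addWaypoint, isDiwalk_addWaypoint_map_some]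

theorem isDipath_addWaypoint_to_none_iff {W : List (Option V)} :
    IsDipath (addWaypoint r t₁ s₂) (some s) none W ↔
      ∃ P, IsDipath r s t₁ P ∧ W = P.map some ++ [none] := by
  constructor
  · rintro ⟨hW, hnodup⟩
    obtain ⟨L, rfl⟩ := List.getLast?_eq_some_iff.1 hW.2.2.1
    obtain ⟨hL, -, hnone⟩ := List.nodup_append'.1 hnodup
    obtain ⟨P, rfl⟩ := exists_map_some_eq_of_none_notMem (List.disjoint_singleton.1 hnone)
    exact ⟨P, ⟨isDiwalk_addWaypoint_concat_none.1 hW, hL.of_map some⟩, rfl⟩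
  · rintro ⟨P, ⟨hP, hnodup⟩, rfl⟩
    refine ⟨isDiwalk_addWaypoint_concat_none.2 hP, ?_⟩
    exact (hnodup.map (Option.some_injective V)).append (List.nodup_singleton _) (by simp)

theorem isDipath_addWaypoint_from_none_iff {W : List (Option V)} :
    IsDipath (addWaypoint r t₁ s₂) none (some t) W ↔
      ∃ Q, IsDipath r s₂ t Q ∧ W = none :: Q.map some := by
  constructor
  · rintro ⟨hW, hnodup⟩
    obtain ⟨L, rfl⟩ := List.head?_eq_some_iff.1 hW.2.1
    obtain ⟨hnone, hL⟩ := List.nodup_cons.1 hnodup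
    obtain ⟨Q, rfl⟩ := exists_map_some_eq_of_none_notMem hnone
    exact ⟨Q, ⟨isDiwalk_addWaypoint_cons_none.1 hW, hL.of_map some⟩, rfl⟩
  · rintro ⟨Q, ⟨hQ, hnodup⟩, rfl⟩
    exact ⟨isDiwalk_addWaypoint_cons_none.2 hQ,
      (hnodup.map (Option.some_injective V)).cons (by simp)⟩

theorem disjoint_arcs_concat_none_cons_none {P Q : List V} :
    List.Disjoint (arcs (P.map some ++ [none])) (arcs (none :: Q.map some)) ↔
      List.Disjoint (arcs P) (arcs Q) := by
  have hinj : (Prod.map some some : V × V → Option V × Option V).Injective :=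
    (Option.some_injective V).prodMap (Option.some_injective V)
  rw [arcs_concat, arcs_cons, arcs_map, arcs_map]
  set fromNone := (((Q.map some).head?.map (none, ·)).toList : List (Option V × Option V))
  set toNone := (((P.map some).getLast?.map (·, none)).toList : List (Option V × Option V))
  have hfrom : ((arcs P).map (Prod.map some some) ++ toNone).Disjoint fromNone := by
    simp [List.disjoint_right, fromNone, toNone]
  have hto : toNone.Disjoint ((arcs Q).map (Prod.map some some)) := by
    simp [List.disjoint_left, toNone]
  rw [List.disjoint_append_right, and_iff_right hfrom, List.disjoint_append_left,
    and_iff_left hto, List.Disjoint.map_iff hinj]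

end Waypoint

/-- correctness of the reduction in Theorem 2. In the digraph obtained
from `r` by adding a waypoint vertex `none` with unique in-arc from `t₁` and unique
out-arc to `s₂`, there exist a directed walk from `s₁` to the waypoint and a directed
walk from the waypoint to `t₂` whose concatenated arc lists have no duplicates iff
there exist arc-disjoint directed paths from `s₁` to `t₁` and from `s₂` to `t₂` in `r`. -/
theorem waypoint_reduction_two_arc_disjoint_paths {V : Type*}
    (r : V → V → Prop) (s₁ t₁ s₂ t₂ : V) :
    (∃ W W' : List (Option V),
        IsDiwalk (addWaypoint r t₁ s₂) (some s₁) none W ∧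
        IsDiwalk (addWaypoint r t₁ s₂) none (some t₂) W' ∧
        (arcs W ++ arcs W').Nodup) ↔
    (∃ P Q : List V, IsDipath r s₁ t₁ P ∧ IsDipath r s₂ t₂ Q ∧
        List.Disjoint (arcs P) (arcs Q)) := by
  rw [exists_isDiwalk_nodup_arcs_append_iff]
  constructor
  · rintro ⟨W, W', hW, hW', hdisj⟩
    obtain ⟨P, hP, rfl⟩ := isDipath_addWaypoint_to_none_iff.1 hW
    obtain ⟨Q, hQ, rfl⟩ := isDipath_addWaypoint_from_none_iff.1 hW'
    exact ⟨P, Q, hP, hQ, disjoint_arcs_concat_none_cons_none.1 hdisj⟩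
  · rintro ⟨P, Q, hP, hQ, hdisj⟩
    exact ⟨P.map some ++ [none], none :: Q.map some,
      isDipath_addWaypoint_to_none_iff.2 ⟨P, hP, rfl⟩,
      isDipath_addWaypoint_from_none_iff.2 ⟨Q, hQ, rfl⟩,
      disjoint_arcs_concat_none_cons_none.2 hdisj⟩
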